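/- Suppose the invertible RDS φ on 𝕊¹ is contractible. Then for any fixed x,y∈𝕊¹, for ℙ-almost all ω∈Ω there exists an unbounded increasing sequence (t_n) in 𝕋⁺ such that d(φ(t_n,ω)x,φ(t_n,ω)y)→0 as n→∞. -/

import Mathlib

open MeasureTheory Filter Topology Set ENNReal

noncomputable section

/-- The natural projection `π : ℝ → 𝕊¹ = ℝ/ℤ`. -/
def circleProj (x : ℝ) : UnitAddCircle := (x : UnitAddCircle)

/-- `f` is an orientation-preserving homeomorphism of the circle: it admits a strictly
monotone degree-one lift. -/
def OrientPreserving (f : UnitAddCircle ≃ₜ UnitAddCircle) : Prop :=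
  ∃ F : ℝ → ℝ, StrictMono F ∧ (∀ x : ℝ, F (x + 1) = F x + 1) ∧
    ∀ x : ℝ, f (circleProj x) = circleProj (F x)

/-- The anticlockwise distance `d₊(x,y) = min {r ≥ 0 : π(x' + r) = y}` (`x'` any lift of `x`). -/
def dPlus (x y : UnitAddCircle) : ℝ :=
  sInf {r : ℝ | 0 ≤ r ∧ ∃ x' : ℝ, circleProj x' = x ∧ circleProj (x' + r) = y}

/-- An invertible random dynamical system on the circle, in discrete or continuous time,
driven by a stationary memoryless noise process. -/
structure RDS (Ω : Type) [m : MeasurableSpace Ω] where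
  /-- the time set `𝕋⁺`: either `ℕ ∪ {0}` or `[0,∞)`, viewed inside `ℝ` -/
  T : Set ℝ
  T_cases : T = Set.range (fun n : ℕ => (n : ℝ)) ∨ T = Set.Ici (0 : ℝ)
  /-- the filtration -/
  F : ℝ → MeasurableSpace Ω
  F_le : ∀ t ∈ T, F t ≤ m
  F_mono : ∀ s ∈ T, ∀ t ∈ T, s ≤ t → F s ≤ F t
  /-- the probability measure -/
  P : Measure Ω
  P_prob : IsProbabilityMeasure P
  /-- the time-shift maps on the noise space -/
  θ : ℝ → Ω → Ω
  θ_zero : θ 0 = id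
  θ_add : ∀ s ∈ T, ∀ t ∈ T, θ (s + t) = θ t ∘ θ s
  θ_preserving : ∀ t ∈ T, MeasurePreserving (θ t) P P
  θ_adapted : ∀ s ∈ T, ∀ t ∈ T, @Measurable Ω Ω (F (s + t)) (F s) (θ t)
  θ_indep : ∀ t ∈ T, ∀ E A : Set Ω, MeasurableSet[F t] E →
    MeasurableSet[⨆ s ∈ T, F s] A → P (E ∩ θ t ⁻¹' A) = P E * P A
  /-- the random homeomorphisms -/
  φ : ℝ → Ω → UnitAddCircle ≃ₜ UnitAddCircle
  φ_orient : ∀ t ∈ T, ∀ ω, OrientPreserving (φ t ω)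
  φ_meas : ∀ t ∈ T, @Measurable (Ω × UnitAddCircle) UnitAddCircle
    ((F t).prod inferInstance) inferInstance (fun p => φ t p.1 p.2)
  φ_zero : ∀ ω, φ 0 ω = Homeomorph.refl UnitAddCircle
  φ_cocycle : ∀ s ∈ T, ∀ t ∈ T, ∀ ω x, φ (s + t) ω x = φ t (θ s ω) (φ s ω x)
  φ_cadlag_right : ∀ ω, ∀ t ∈ T, ∀ tn : ℕ → ℝ, (∀ n, tn n ∈ T) → Antitone tn →
    Tendsto tn atTop (𝓝 t) → ∀ (xn : ℕ → UnitAddCircle) (x : UnitAddCircle),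
      Tendsto xn atTop (𝓝 x) →
      Tendsto (fun n => φ (tn n) ω (xn n)) atTop (𝓝 (φ t ω x))
  /-- the left-limit maps -/
  φ_left_lim : ℝ → Ω → UnitAddCircle → UnitAddCircle
  φ_cadlag_left : ∀ ω, ∀ t ∈ T, ∀ tn : ℕ → ℝ, (∀ n, tn n ∈ T) → StrictMono tn →
    Tendsto tn atTop (𝓝 t) → ∀ (xn : ℕ → UnitAddCircle) (x : UnitAddCircle),
      Tendsto xn atTop (𝓝 x) →
      Tendsto (fun n => φ (tn n) ω (xn n)) atTop (𝓝 (φ_left_lim t ω x))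

/-- A probability measure on the circle is atomless if every singleton is null. -/
def Atomless (ρ : Measure UnitAddCircle) : Prop := ∀ x, ρ {x} = 0

/-- A measure on the circle has full support. -/
def FullSupport (ρ : Measure UnitAddCircle) : Prop :=
  ∀ U : Set UnitAddCircle, IsOpen U → U.Nonempty → 0 < ρ U

/-- The (topological) support of a measure on the circle. -/
def msupport (ρ : Measure UnitAddCircle) : Set UnitAddCircle :=
  {x | ∀ U : Set UnitAddCircle, IsOpen U → x ∈ U → 0 < ρ U}

namespace RDS

variable {Ω : Type} [m : MeasurableSpace Ω] (S : RDS Ω)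

/-- the future σ-algebra `𝓕₊ = σ(𝓕_t : t ∈ 𝕋⁺)`. -/
def Fplus : MeasurableSpace Ω := ⨆ t ∈ S.T, S.F t

/-- The filter "t → ∞ along the time set 𝕋⁺". -/
def tFilter : Filter ℝ := atTop ⊓ 𝓟 S.T

/-- two-point contractibility. -/
def Contractible : Prop := ∀ x y : UnitAddCircle, x ≠ y →
  0 < S.P {ω | ∃ t ∈ S.T, dist (S.φ t ω x) (S.φ t ω y) < dist x y}

/-- compressibility. -/
def Compressible : Prop := ∀ x y : UnitAddCircle, x ≠ y →
  0 < S.P {ω | ∃ t ∈ S.T, dPlus (S.φ t ω x) (S.φ t ω y) < dPlus x y}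

/-- `p` is a deterministic fixed point. -/
def DetFixedPoint (p : UnitAddCircle) : Prop :=
  ∀ᵐ ω ∂S.P, ∀ t ∈ S.T, S.φ t ω p = p

/-- `A` is forward-invariant. -/
def ForwardInvariant (A : Set UnitAddCircle) : Prop :=
  ∀ᵐ ω ∂S.P, ∀ t ∈ S.T, ⇑(S.φ t ω) '' A ⊆ A

/-- reverse-minimal dynamics: the only open forward-invariant sets are `∅` and `𝕊¹`. -/
def ReverseMinimal : Prop :=
  ∀ A : Set UnitAddCircle, IsOpen A → S.ForwardInvariant A → A = ∅ ∨ A = Set.univ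

/-- synchronisation. -/
def Synchronising : Prop := ∀ x y : UnitAddCircle,
  S.P {ω | Tendsto (fun t => dist (S.φ t ω x) (S.φ t ω y)) S.tFilter (𝓝 0)} = 1

/-- everywhere local stability. -/
def EverywhereLocallyStable : Prop := ∀ x : UnitAddCircle,
  S.P {ω | ∃ U : Set UnitAddCircle, IsOpen U ∧ x ∈ U ∧
    Tendsto (fun t => volume (⇑(S.φ t ω) '' U)) S.tFilter (𝓝 0)} = 1

/-- stable synchronisation. -/
def StablySynchronising : Prop := S.Synchronising ∧ S.EverywhereLocallyStable

/-- `ρ` is reverse-stationary: `ρ(A) = ∫ ρ(φ(t,ω)A) ℙ(dω)` for all `t ∈ 𝕋⁺`, Borel `A`. -/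
def ReverseStationary (ρ : Measure UnitAddCircle) : Prop :=
  ∀ t ∈ S.T, ∀ A : Set UnitAddCircle, MeasurableSet A →
    ρ A = ∫⁻ ω, ρ (⇑(S.φ t ω) '' A) ∂S.P

/-- `r` is a crack point of `ω`. -/
def CrackPoint (ω : Ω) (r : UnitAddCircle) : Prop :=
  ∀ G : Set UnitAddCircle, IsClosed G → r ∉ G →
    Tendsto (fun t => volume (⇑(S.φ t ω) '' G)) S.tFilter (𝓝 0)

/-- the set of contractive sample points. -/
def Ωc : Set Ω := {ω | ∃ r, S.CrackPoint ω r}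

/-- the reverse transition probabilities `φ̄ₓᵗ(A) = ℙ(ω : φ(t,ω)⁻¹(x) ∈ A)`. -/
def revTrans (t : ℝ) (x : UnitAddCircle) (A : Set UnitAddCircle) : ℝ≥0∞ :=
  S.P {ω | (S.φ t ω).symm x ∈ A}

/-- the forward transition probabilities `φₓᵗ(A) = ℙ(ω : φ(t,ω)x ∈ A)`. -/
def fwdTrans (t : ℝ) (x : UnitAddCircle) (A : Set UnitAddCircle) : ℝ≥0∞ :=
  S.P {ω | S.φ t ω x ∈ A}

/-- `ρ` is stationary for a transition family `ν`. -/
def StationaryFor (ν : ℝ → UnitAddCircle → Set UnitAddCircle → ℝ≥0∞)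
    (ρ : Measure UnitAddCircle) : Prop :=
  ∀ t ∈ S.T, ∀ A : Set UnitAddCircle, MeasurableSet A → ρ A = ∫⁻ x, ν t x A ∂ρ

/-- `ρ` is ergodic for a transition family `ν`. -/
def ErgodicFor (ν : ℝ → UnitAddCircle → Set UnitAddCircle → ℝ≥0∞)
    (ρ : Measure UnitAddCircle) : Prop :=
  S.StationaryFor ν ρ ∧ ∀ A : Set UnitAddCircle, MeasurableSet A →
    (∀ t ∈ S.T, ∀ᵐ x ∂ρ, x ∈ A → ν t x A = 1) → ρ A = 0 ∨ ρ A = 1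

end RDS

/-! Let `f z` be the probability that the trajectory of `z` avoids an open set `U`, here the
`ε`-neighbourhood of the diagonal for the two-point motion. By the Markov property `f` is
subharmonic, and it is upper semicontinuous because avoiding `U` is a closed condition on `z`.
If its maximum were positive, take among the maximisers a point minimising the distance between
the two coordinates: by subharmonicity the motion started there almost surely stays among the
maximisers, so the distance never decreases, contradicting contractibility. Hence `U` is almost
surely hit, and by stationarity of the noise it is hit after any given time. Right-continuity
allows one to look at rational times only, so that all of this involves countably many events. -/

open ProbabilityTheory

theorem le_measure_limsup_atTop {Ω : Type*} [MeasurableSpace Ω] {μ : Measure Ω}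
    [IsFiniteMeasure μ] {s : ℕ → Set Ω} (hs : ∀ n, MeasurableSet (s n)) {c : ℝ≥0∞}
    (hc : ∀ n, c ≤ μ (s n)) : c ≤ μ (limsup s atTop) := by
  have hanti : Antitone fun k => ⋃ n ≥ k, s n := fun _ _ hkl =>
    biUnion_subset_biUnion_left fun _ hn => hkl.trans hn
  have hlim := tendsto_measure_iInter_atTop (μ := μ)
    (fun k => (MeasurableSet.iUnion fun n => .iUnion fun _ : n ≥ k => hs n).nullMeasurableSet)
    hanti ⟨0, measure_ne_top _ _⟩
  rw [limsup_eq_iInf_iSup_of_nat]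
  exact ge_of_tendsto' hlim fun k =>
    (hc k).trans (measure_mono (subset_biUnion_of_mem (mem_Ici.2 le_rfl)))

theorem upperSemicontinuous_measure_of_isClosed {Ω Z : Type*} [MeasurableSpace Ω]
    [TopologicalSpace Z] [SequentialSpace Z] (μ : Measure Ω) [IsFiniteMeasure μ]
    {A : Z → Set Ω} (hA : ∀ z, MeasurableSet (A z)) (hclosed : ∀ ω, IsClosed {z | ω ∈ A z}) :
    UpperSemicontinuous fun z => μ (A z) := by
  refine upperSemicontinuous_iff_isClosed_preimage.2 fun c => IsSeqClosed.isClosed ?_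
  intro zs z hzs hz
  have hlimsup : limsup (fun n => A (zs n)) atTop ⊆ A z := fun ω hω => by
    have hfreq : ∃ᶠ n in atTop, zs n ∈ {z | ω ∈ A z} := mem_limsup_iff_frequently_mem.1 hω
    exact (hclosed ω).mem_of_frequently_of_tendsto hfreq hz
  exact (le_measure_limsup_atTop (fun n => hA (zs n)) hzs).trans (measure_mono hlimsup)

/-- A maximum principle: the measure `ν` in `h` would put mass strictly below the minimum of `V`
on the set where `f` attains its maximum, whereas subharmonicity confines `ν` to that set. -/
theorem eq_zero_of_le_lintegral_of_measure_lt_pos {Z β : Type*} [TopologicalSpace Z]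
    [CompactSpace Z] [MeasurableSpace Z] [LinearOrder β] {f : Z → ℝ≥0∞}
    {V : Z → β} (hf : UpperSemicontinuous f) (hf_top : ∀ z, f z ≠ ∞)
    (hV : LowerSemicontinuous V)
    (h : ∀ z, f z ≠ 0 → ∃ ν : Measure Z, IsProbabilityMeasure ν ∧ f z ≤ ∫⁻ w, f w ∂ν ∧
      0 < ν {w | V w < V z})
    (z : Z) : f z = 0 := by
  obtain ⟨p, -, hp⟩ := (hf.upperSemicontinuousOn univ).exists_isMaxOn ⟨z, mem_univ z⟩
    isCompact_univ
  replace hp : ∀ w, f w ≤ f p := fun w => hp (mem_univ w)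
  by_contra hz
  have hpos : f p ≠ 0 := (pos_iff_ne_zero.2 hz |>.trans_le (hp z)).ne'
  have hcompact : IsCompact {w | f p ≤ f w} :=
    (upperSemicontinuous_iff_isClosed_preimage.1 hf (f p)).isCompact
  obtain ⟨q, hq, hmin⟩ := (hV.lowerSemicontinuousOn _).exists_isMinOn ⟨p, le_refl (f p)⟩ hcompact
  obtain ⟨ν, hν, hsub, hlt⟩ := h q (hpos.bot_lt.trans_le hq).ne'
  have hint : ∫⁻ _, f p ∂ν ≤ ∫⁻ w, f w ∂ν := by
    simpa only [lintegral_const, measure_univ, mul_one] using hq.trans hsub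
  have hle : ∫⁻ w, f w ∂ν ≤ f p := by
    simpa only [lintegral_const, measure_univ, mul_one] using lintegral_mono (μ := ν) fun w => hp w
  have hmax : ∀ᵐ w ∂ν, f w = f p :=
    ae_eq_of_ae_le_of_lintegral_le (ae_of_all _ hp) (hle.trans_lt (hf_top p).lt_top).ne
      aemeasurable_const hint
  have hge : ∀ᵐ w ∂ν, ¬V w < V q := by
    filter_upwards [hmax] with w hw
    exact not_lt.2 (hmin hw.ge)
  exact hlt.ne' (by simpa only [ae_iff, not_not] using hge)

theorem measure_prodMk_mem_of_indepFun {Ω α β : Type*} [MeasurableSpace Ω] [MeasurableSpace α]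
    [MeasurableSpace β] {μ : Measure Ω} [IsFiniteMeasure μ] {X : Ω → α} {Y : Ω → β}
    (hX : Measurable X) (hY : Measurable Y) (hXY : IndepFun X Y μ) {B : Set (α × β)}
    (hB : MeasurableSet B) :
    μ {ω | (X ω, Y ω) ∈ B} = ∫⁻ ω, μ {ω' | (X ω, Y ω') ∈ B} ∂μ := by
  have hslice (a : α) : μ.map Y (Prod.mk a ⁻¹' B) = μ {ω' | (a, Y ω') ∈ B} :=
    Measure.map_apply hY (measurable_prodMk_left hB)
  calc μ {ω | (X ω, Y ω) ∈ B}
      = μ.map (fun ω => (X ω, Y ω)) B := (Measure.map_apply (hX.prodMk hY) hB).symm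
    _ = (μ.map X).prod (μ.map Y) B := by
      rw [(indepFun_iff_map_prod_eq_prod_map_map hX.aemeasurable hY.aemeasurable).1 hXY]
    _ = ∫⁻ ω, μ.map Y (Prod.mk (X ω) ⁻¹' B) ∂μ := by
      rw [Measure.prod_apply hB, lintegral_map (measurable_measure_prodMk_left hB) hX]
    _ = ∫⁻ ω, μ {ω' | (X ω, Y ω') ∈ B} ∂μ := by simp only [hslice]

theorem measurable_prodMk_diag {α β γ : Type*} [MeasurableSpace α] [MeasurableSpace β]
    [MeasurableSpace γ] {g : α × β → γ} (hg : Measurable g) :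
    Measurable fun p : α × (β × β) => (g (p.1, p.2.1), g (p.1, p.2.2)) := by
  fun_prop

theorem exists_seq_monotone_tendsto_of_mapClusterPt {α Y : Type*} [Preorder α] [Nonempty α]
    [IsDirectedOrder α] [(atTop : Filter α).IsCountablyGenerated] [TopologicalSpace Y]
    [FirstCountableTopology Y] {u : α → Y} {y : Y} (h : MapClusterPt y atTop u) :
    ∃ t : ℕ → α, Monotone t ∧ Tendsto t atTop atTop ∧ Tendsto (u ∘ t) atTop (𝓝 y) := by
  obtain ⟨B, hB⟩ := (𝓝 y).exists_antitone_basis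
  obtain ⟨x, -, hx⟩ := exists_seq_monotone_tendsto_atTop_atTop α
  -- Building the times together with their ranks `n` keeps `x n ≤ t` and `u t ∈ B n` available.
  obtain ⟨p, hp, hlt⟩ := exists_seq_of_forall_finset_exists
    (fun p : ℕ × α => x p.1 ≤ p.2 ∧ u p.2 ∈ B p.1) (fun p q => p.1 < q.1 ∧ p.2 ≤ q.2)
    fun s _ => by
      obtain ⟨n, hn⟩ : ∃ n, ∀ q ∈ s, q.1 < n :=
        ⟨s.sup Prod.fst + 1, fun q hq => Nat.lt_succ_of_le (Finset.le_sup hq)⟩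
      have hlarge : ∀ᶠ t in atTop, x n ≤ t ∧ ∀ q ∈ s, q.2 ≤ t :=
        (eventually_ge_atTop (x n)).and
          ((eventually_all_finset s).2 fun q _ => eventually_ge_atTop q.2)
      obtain ⟨t, hu, hxt, hst⟩ :=
        ((mapClusterPt_iff_frequently.1 h _ (hB.mem n)).and_eventually hlarge).exists
      exact ⟨(n, t), ⟨hxt, hu⟩, fun q hq => ⟨hn q hq, hst q hq⟩⟩
  have hrank : StrictMono fun n => (p n).1 := fun m n hmn => (hlt m n hmn).1
  refine ⟨fun n => (p n).2, monotone_nat_of_le_succ fun n => (hlt n _ n.lt_succ_self).2, ?_, ?_⟩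
  · exact tendsto_atTop_mono (fun n => (hp n).1) (hx.comp hrank.tendsto_atTop)
  · exact hB.tendsto fun n => hB.antitone hrank.le_apply (hp n).2

/-- A random dynamical system on `Z` in one-sided time `M`, driven by stationary memoryless noise
on the probability space `(Ω, P)`: the abstraction of `RDS` in which the maps of a topological
space need not be invertible and no regularity in time is imposed. -/
structure MemorylessRDS (M Z : Type*) {Ω : Type*} [AddMonoid M] [TopologicalSpace Z]
    [MeasurableSpace Z] [mΩ : MeasurableSpace Ω] (P : Measure Ω) where
  𝓕 : M → MeasurableSpace Ω
  𝓕_le : ∀ t, 𝓕 t ≤ mΩ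
  θ : M → Ω → Ω
  measurePreserving_θ : ∀ t, MeasurePreserving (θ t) P P
  indep_θ : ∀ t, Indep (𝓕 t) ((⨆ s, 𝓕 s).comap (θ t)) P
  φ : M → Ω → Z → Z
  continuous_φ : ∀ t ω, Continuous (φ t ω)
  measurable_φ : ∀ t, Measurable[(𝓕 t).prod inferInstance] fun p : Ω × Z => φ t p.1 p.2
  φ_zero : ∀ ω z, φ 0 ω z = z
  φ_add : ∀ s t ω z, φ (s + t) ω z = φ t (θ s ω) (φ s ω z)

namespace MemorylessRDS

variable {M Z Ω : Type*} [AddMonoid M] [TopologicalSpace Z] [MeasurableSpace Z]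
  [mΩ : MeasurableSpace Ω] {P : Measure Ω}

section Avoidance

variable (R : MemorylessRDS M Z P)

/-- The σ-algebra `𝓕₊` generated by the noise at all times. -/
abbrev future : MeasurableSpace Ω := ⨆ s, R.𝓕 s

/-- The event that the trajectory of `z` never enters `U`. -/
def avoid (U : Set Z) (z : Z) : Set Ω := {ω | ∀ t, R.φ t ω z ∉ U}

variable {R} in
theorem mem_avoid {U : Set Z} {z : Z} {ω : Ω} : ω ∈ R.avoid U z ↔ ∀ t, R.φ t ω z ∉ U :=
  Iff.rfl

theorem future_le : R.future ≤ mΩ := iSup_le R.𝓕_le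

theorem measurable_φ_apply (t : M) (z : Z) : Measurable[R.𝓕 t] fun ω => R.φ t ω z :=
  (R.measurable_φ t).comp (@measurable_prodMk_right _ _ (R.𝓕 t) _ z)

theorem measure_θ_mem_eq_lintegral [IsFiniteMeasure P] {A : Z → Set Ω}
    (hA : MeasurableSet[R.future.prod inferInstance] {p : Ω × Z | p.1 ∈ A p.2}) (t : M) (z : Z) :
    P {ω | R.θ t ω ∈ A (R.φ t ω z)} = ∫⁻ ω, P (A (R.φ t ω z)) ∂P := by
  have hφ := (R.measurable_φ_apply t z).mono (R.𝓕_le t) le_rfl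
  have hθ : Measurable[mΩ, R.future] (R.θ t) :=
    (R.measurePreserving_θ t).measurable.mono le_rfl R.future_le
  have hindep : @IndepFun _ _ _ mΩ _ R.future (fun ω => R.φ t ω z) (R.θ t) P :=
    indep_of_indep_of_le_left (R.indep_θ t) (R.measurable_φ_apply t z).comap_le
  have hsection (w : Z) : P (R.θ t ⁻¹' A w) = P (A w) :=
    (R.measurePreserving_θ t).measure_preimage
      (R.future_le _ (@measurable_prodMk_right _ _ R.future _ w _ hA)).nullMeasurableSet
  calc P {ω | R.θ t ω ∈ A (R.φ t ω z)}
      = ∫⁻ ω, P (R.θ t ⁻¹' A (R.φ t ω z)) ∂P :=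
        @measure_prodMk_mem_of_indepFun _ _ _ mΩ _ R.future P _ _ _ hφ hθ hindep _
          (@measurable_swap _ _ _ R.future _ hA)
    _ = ∫⁻ ω, P (A (R.φ t ω z)) ∂P := by simp only [hsection]

theorem measurableSet_avoid_prod [Countable M] {U : Set Z} (hU : MeasurableSet U) :
    MeasurableSet[R.future.prod inferInstance] {p : Ω × Z | p.1 ∈ R.avoid U p.2} := by
  simp only [mem_avoid, ofPred_forall]
  refine @MeasurableSet.iInter _ _ (R.future.prod _) _ _ fun t => ?_
  have hprod : (R.𝓕 t).prod ‹MeasurableSpace Z› ≤ R.future.prod inferInstance :=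
    sup_le_sup_right (MeasurableSpace.comap_mono (le_iSup R.𝓕 t)) _
  exact hprod _ (R.measurable_φ t hU.compl)

theorem measurableSet_avoid [Countable M] {U : Set Z} (hU : MeasurableSet U) (z : Z) :
    MeasurableSet (R.avoid U z) :=
  R.future_le _ (@measurable_prodMk_right _ _ R.future _ z _ (R.measurableSet_avoid_prod hU))

theorem avoid_subset_preimage_θ (U : Set Z) (t : M) (z : Z) :
    R.avoid U z ⊆ {ω | R.θ t ω ∈ R.avoid U (R.φ t ω z)} := fun ω hω s => by
  rw [← R.φ_add]
  exact hω (t + s)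

theorem avoid_eq_empty_of_mem {U : Set Z} {z : Z} (hz : z ∈ U) : R.avoid U z = ∅ :=
  eq_empty_of_forall_notMem fun ω hω => hω 0 (by rwa [R.φ_zero])

theorem upperSemicontinuous_measure_avoid [Countable M] [OpensMeasurableSpace Z]
    [SequentialSpace Z] [IsFiniteMeasure P] {U : Set Z} (hU : IsOpen U) :
    UpperSemicontinuous fun z => P (R.avoid U z) := by
  refine upperSemicontinuous_measure_of_isClosed P (R.measurableSet_avoid hU.measurableSet)
    fun ω => ?_
  simp only [mem_avoid, ofPred_forall]
  exact isClosed_iInter fun t => hU.isClosed_compl.preimage (R.continuous_φ t ω)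

theorem measure_avoid_eq_zero [Countable M] [OpensMeasurableSpace Z] [SequentialSpace Z]
    [CompactSpace Z] [IsProbabilityMeasure P] {β : Type*} [LinearOrder β] {V : Z → β}
    (hV : LowerSemicontinuous V) {U : Set Z} (hU : IsOpen U)
    (h : ∀ z ∉ U, 0 < P {ω | ∃ t, V (R.φ t ω z) < V z}) (z : Z) : P (R.avoid U z) = 0 := by
  have husc := R.upperSemicontinuous_measure_avoid hU
  refine eq_zero_of_le_lintegral_of_measure_lt_pos husc (fun _ => measure_ne_top _ _) hV ?_ z
  intro w hw
  have hwU : w ∉ U := fun hwU => hw (by rw [R.avoid_eq_empty_of_mem hwU, measure_empty])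
  obtain ⟨t, ht⟩ : ∃ t, 0 < P {ω | V (R.φ t ω w) < V w} :=
    exists_measure_pos_of_not_measure_iUnion_null <| by
      simpa only [ofPred_exists] using (h w hwU).ne'
  have hφ := (R.measurable_φ_apply t w).mono (R.𝓕_le t) le_rfl
  refine ⟨P.map fun ω => R.φ t ω w, Measure.isProbabilityMeasure_map hφ.aemeasurable, ?_,
    ht.trans_le (Measure.le_map_apply hφ.aemeasurable _)⟩
  calc P (R.avoid U w)
      ≤ P {ω | R.θ t ω ∈ R.avoid U (R.φ t ω w)} := measure_mono (R.avoid_subset_preimage_θ U t w)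
    _ = ∫⁻ ω, P (R.avoid U (R.φ t ω w)) ∂P :=
      R.measure_θ_mem_eq_lintegral (R.measurableSet_avoid_prod hU.measurableSet) t w
    _ = ∫⁻ v, P (R.avoid U v) ∂P.map fun ω => R.φ t ω w :=
      (lintegral_map husc.measurable hφ).symm

theorem ae_frequently_mem [Countable M] [Preorder M] [IsDirectedOrder M] [IsFiniteMeasure P]
    (hM : ∀ s t : M, s ≤ s + t) {U : Set Z} (hU : MeasurableSet U)
    (h : ∀ z, P (R.avoid U z) = 0) (z : Z) :
    ∀ᵐ ω ∂P, ∃ᶠ t in atTop, R.φ t ω z ∈ U := by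
  have hshift (s : M) : ∀ᵐ ω ∂P, R.θ s ω ∉ R.avoid U (R.φ s ω z) := by
    rw [ae_iff]
    simp only [not_not, h, lintegral_zero,
      R.measure_θ_mem_eq_lintegral (R.measurableSet_avoid_prod hU)]
  filter_upwards [ae_all_iff.2 hshift] with ω hω
  refine frequently_atTop.2 fun s => ?_
  obtain ⟨t, ht⟩ : ∃ t, R.φ t (R.θ s ω) (R.φ s ω z) ∈ U := by
    simpa only [mem_avoid, not_forall, not_not] using hω s
  exact ⟨s + t, hM s t, by rwa [R.φ_add]⟩

/-- The two-point motion: two trajectories driven by the same noise. -/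
def twoPoint : MemorylessRDS M (Z × Z) P where
  __ := R
  φ t ω z := (R.φ t ω z.1, R.φ t ω z.2)
  continuous_φ t ω := (R.continuous_φ t ω).prodMap (R.continuous_φ t ω)
  measurable_φ t := @measurable_prodMk_diag _ _ _ (R.𝓕 t) _ _ _ (R.measurable_φ t)
  φ_zero ω z := Prod.ext (R.φ_zero ω z.1) (R.φ_zero ω z.2)
  φ_add s t ω z := Prod.ext (R.φ_add s t ω z.1) (R.φ_add s t ω z.2)

end Avoidance

/-- Two-point contractibility, as in `RDS.Contractible`. -/
def Contractible {X : Type*} [MetricSpace X] [MeasurableSpace X] (R : MemorylessRDS M X P) :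
    Prop :=
  ∀ x y, x ≠ y → 0 < P {ω | ∃ t, dist (R.φ t ω x) (R.φ t ω y) < dist x y}

theorem Contractible.ae_frequently_dist_lt [Countable M] [Preorder M] [IsDirectedOrder M]
    [IsProbabilityMeasure P] {X : Type*} [MetricSpace X] [CompactSpace X] [MeasurableSpace X]
    [OpensMeasurableSpace X] {R : MemorylessRDS M X P} (hR : R.Contractible)
    (hM : ∀ s t : M, s ≤ s + t) {ε : ℝ} (hε : 0 < ε) (x y : X) :
    ∀ᵐ ω ∂P, ∃ᶠ t in atTop, dist (R.φ t ω x) (R.φ t ω y) < ε := by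
  have hdist : Continuous fun z : X × X => dist z.1 z.2 := continuous_dist
  have hU : IsOpen {z : X × X | dist z.1 z.2 < ε} := isOpen_lt hdist continuous_const
  refine R.twoPoint.ae_frequently_mem hM hU.measurableSet (fun z => ?_) (x, y)
  refine R.twoPoint.measure_avoid_eq_zero hdist.lowerSemicontinuous hU (fun w hw => ?_) z
  exact hR w.1 w.2 (dist_pos.1 (hε.trans_le (not_lt.1 hw)))

theorem Contractible.ae_mapClusterPt_dist [Countable M] [Preorder M] [IsDirectedOrder M]
    [IsProbabilityMeasure P] {X : Type*} [MetricSpace X] [CompactSpace X] [MeasurableSpace X]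
    [OpensMeasurableSpace X] {R : MemorylessRDS M X P} (hR : R.Contractible)
    (hM : ∀ s t : M, s ≤ s + t) (x y : X) :
    ∀ᵐ ω ∂P, MapClusterPt 0 atTop fun t => dist (R.φ t ω x) (R.φ t ω y) := by
  filter_upwards [ae_all_iff.2 fun n : ℕ =>
    hR.ae_frequently_dist_lt hM (Nat.one_div_pos_of_nat (n := n)) x y] with ω hω
  refine Metric.nhds_basis_ball_inv_nat_succ.mapClusterPt_iff_frequently.2 fun n _ => ?_
  simpa only [mem_ball_zero_iff, Real.norm_eq_abs, abs_of_nonneg dist_nonneg] using hω n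

end MemorylessRDS

theorem contractible_ae_exists_unbounded_increasing_times_general {M X Ω : Type*} [AddMonoid M]
    [Preorder M] [IsDirectedOrder M] [Countable M] (hM : ∀ s t : M, s ≤ s + t) [MetricSpace X]
    [CompactSpace X] [MeasurableSpace X] [OpensMeasurableSpace X] [MeasurableSpace Ω]
    {P : Measure Ω} [IsProbabilityMeasure P] {R : MemorylessRDS M X P} (hR : R.Contractible)
    (x y : X) :
    ∀ᵐ ω ∂P, ∃ tn : ℕ → M, Monotone tn ∧ Tendsto tn atTop atTop ∧
      Tendsto (fun n => dist (R.φ (tn n) ω x) (R.φ (tn n) ω y)) atTop (𝓝 0) := by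
  filter_upwards [hR.ae_mapClusterPt_dist hM x y] with ω hω
  exact exists_seq_monotone_tendsto_of_mapClusterPt hω

namespace RDS

variable {Ω : Type} [MeasurableSpace Ω] (S : RDS Ω)

theorem natCast_mem_T (n : ℕ) : (n : ℝ) ∈ S.T := by
  rcases S.T_cases with h | h <;> rw [h]
  · exact mem_range_self n
  · exact mem_Ici.2 n.cast_nonneg

theorem add_mem_T {s t : ℝ} (hs : s ∈ S.T) (ht : t ∈ S.T) : s + t ∈ S.T := by
  rcases S.T_cases with h | h <;> rw [h] at hs ht ⊢
  · obtain ⟨a, rfl⟩ := hs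
    obtain ⟨b, rfl⟩ := ht
    exact ⟨a + b, Nat.cast_add a b⟩
  · exact add_nonneg (mem_Ici.1 hs) (mem_Ici.1 ht)

theorem nonneg_of_mem_T {t : ℝ} (ht : t ∈ S.T) : 0 ≤ t := by
  rcases S.T_cases with h | h <;> rw [h] at ht
  · obtain ⟨n, rfl⟩ := ht
    exact n.cast_nonneg
  · exact ht

/-- The rational elements of the time set: a countable monoid of times, which by right-continuity
sees all strict inequalities between distances. -/
def rationalTimes : AddSubmonoid ℚ where
  carrier := {q | (q : ℝ) ∈ S.T}
  zero_mem' := by simpa using S.natCast_mem_T 0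
  add_mem' {p q} hp hq := by simpa using S.add_mem_T hp hq

theorem exists_antitone_rationalTimes_tendsto {t : ℝ} (ht : t ∈ S.T) :
    ∃ q : ℕ → S.rationalTimes, Antitone (fun n => ((q n : ℚ) : ℝ)) ∧
      Tendsto (fun n => ((q n : ℚ) : ℝ)) atTop (𝓝 t) := by
  rcases S.T_cases with h | h
  · obtain ⟨k, rfl⟩ := h ▸ ht
    have hk : (k : ℚ) ∈ S.rationalTimes := by simpa [rationalTimes] using ht
    exact ⟨fun _ => ⟨k, hk⟩, antitone_const, by simp⟩
  · obtain ⟨u, hanti, hu, hlim⟩ :=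
      Dense.exists_seq_strictAnti_tendsto (Rat.denseRange_cast (𝕜 := ℝ)) t
    choose q hq using fun n => (hu n).2
    have hmem (n : ℕ) : q n ∈ S.rationalTimes := by
      change (q n : ℝ) ∈ S.T
      rw [hq, h]
      exact (S.nonneg_of_mem_T ht).trans (hu n).1.le
    obtain rfl : (fun n => (q n : ℝ)) = u := funext hq
    exact ⟨fun n => ⟨q n, hmem n⟩, hanti.antitone, hlim⟩

theorem tendsto_coe_rationalTimes :
    Tendsto (fun q : S.rationalTimes => ((q : ℚ) : ℝ)) atTop atTop := by
  refine Monotone.tendsto_atTop_atTop (fun p q hpq => Rat.cast_mono hpq) fun r => ?_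
  obtain ⟨n, hn⟩ := exists_nat_ge r
  exact ⟨⟨n, by simpa [rationalTimes] using S.natCast_mem_T n⟩, by simpa using hn⟩

theorem rationalTimes_le_add (s t : S.rationalTimes) : s ≤ s + t :=
  le_add_of_nonneg_right (Rat.cast_nonneg.1 (S.nonneg_of_mem_T t.2))

/-- The system `S` observed at rational times only. -/
def atRationalTimes : MemorylessRDS S.rationalTimes UnitAddCircle S.P where
  𝓕 q := S.F (q : ℚ)
  𝓕_le q := S.F_le _ q.2
  θ q := S.θ (q : ℚ)
  measurePreserving_θ q := S.θ_preserving _ q.2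
  indep_θ q := by
    have hfuture : ⨆ p : S.rationalTimes, S.F (p : ℚ) ≤ ⨆ s ∈ S.T, S.F s :=
      iSup_le fun p => le_iSup₂ (f := fun s (_ : s ∈ S.T) => S.F s) _ p.2
    rw [Indep_iff]
    rintro E _ hE ⟨A, hA, rfl⟩
    rw [S.θ_indep _ q.2 E A hE (hfuture _ hA),
      (S.θ_preserving _ q.2).measure_preimage
        (iSup₂_le S.F_le _ (hfuture _ hA)).nullMeasurableSet]
  φ q ω := S.φ (q : ℚ) ω
  continuous_φ q ω := (S.φ (q : ℚ) ω).continuous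
  measurable_φ q := S.φ_meas _ q.2
  φ_zero ω z := by simp [S.φ_zero]
  φ_add p q ω z := by simpa using S.φ_cocycle _ p.2 _ q.2 ω z

variable {S}

theorem Contractible.atRationalTimes (h : S.Contractible) : S.atRationalTimes.Contractible := by
  refine fun x y hxy => (h x y hxy).trans_le (measure_mono ?_)
  rintro ω ⟨t, ht, hlt⟩
  obtain ⟨q, hanti, hlim⟩ := S.exists_antitone_rationalTimes_tendsto ht
  have hφ (z : UnitAddCircle) :
      Tendsto (fun n => S.φ (q n : ℚ) ω z) atTop (𝓝 (S.φ t ω z)) :=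
    S.φ_cadlag_right ω t ht _ (fun n => (q n).2) hanti hlim _ z tendsto_const_nhds
  obtain ⟨n, hn⟩ := (((hφ x).dist (hφ y)).eventually_lt_const hlt).exists
  exact ⟨q n, hn⟩

end RDS

/-- if `φ` is contractible then for any `x y`, almost every `ω` admits an unbounded
increasing sequence of times along which the two trajectories approach each other. -/
theorem contractible_ae_exists_unbounded_increasing_times
    {Ω : Type} [MeasurableSpace Ω] (S : RDS Ω) (h : S.Contractible)
    (x y : UnitAddCircle) :
    ∀ᵐ ω ∂S.P, ∃ tn : ℕ → ℝ, (∀ n, tn n ∈ S.T) ∧ Monotone tn ∧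
      Tendsto tn atTop atTop ∧
      Tendsto (fun n => dist (S.φ (tn n) ω x) (S.φ (tn n) ω y)) atTop (𝓝 0) := by
  have := S.P_prob
  filter_upwards [contractible_ae_exists_unbounded_increasing_times_general
    S.rationalTimes_le_add h.atRationalTimes x y] with ω ⟨q, hmono, htop, hdist⟩
  exact ⟨fun n => (q n : ℚ), fun n => (q n).2, fun _ _ hmn => Rat.cast_mono (hmono hmn),
    S.tendsto_coe_rationalTimes.comp htop, hdist⟩
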